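/- For any unitary U on the n-qubit Hilbert space (ℂ²)^{⊗n}, the following exact identity holds on the doubled system: U† ⊗ U = S · ∏_{i=1}^n [ (1/2) I⊗I + (1/2) Σ_{P∈{X,Y,Z}} P_i ⊗ (U† P_i U) ], where in each factor P_i acts on qubit i of the first register and U† P_i U acts on the second register; the n factors pairwise commute, so the product may be taken in any order. -/

import Mathlib

/-!
Conjugating by `1 ⊗ U` reduces the identity to `U = 1`: each factor equals
`(1 ⊗ U†) Sᵢ (1 ⊗ U)`, where `Sᵢ = ½ (I⊗I + X⊗X + Y⊗Y + Z⊗Z)` swaps qubit `i` of the two registers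
(`half_pauli_sum_eq_qubitSwap`, `factor_eq_conj`). Since `U U† = 1`, products of factors telescope,
so the factors commute because the `Sᵢ` do, and their product is `(1 ⊗ U†) S (1 ⊗ U)` because
`∏ᵢ Sᵢ = S` (`prod_qubitSwap`). Finally `S (1 ⊗ U†) S = U† ⊗ 1`.

The statements about swaps are handled by viewing each swap as the matrix `funMatrix f` of a map `f`
on the basis, for which multiplication is composition of maps.
-/


open Matrix
open Kronecker

noncomputable section

/-- Operators on the `n`-qubit Hilbert space `(ℂ²)^{⊗n}`, as matrices indexed by bitstrings. -/
abbrev QOp (n : ℕ) := Matrix (Fin n → Fin 2) (Fin n → Fin 2) ℂ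

/-- Operators on the doubled system `((ℂ²)^{⊗n}) ⊗ ((ℂ²)^{⊗n})` of two `n`-qubit registers. -/
abbrev DOp (n : ℕ) :=
  Matrix ((Fin n → Fin 2) × (Fin n → Fin 2)) ((Fin n → Fin 2) × (Fin n → Fin 2)) ℂ

/-- The single-qubit Pauli `X` matrix. -/
def X2 : Matrix (Fin 2) (Fin 2) ℂ := !![0, 1; 1, 0]

/-- The single-qubit Pauli `Y` matrix. -/
def Y2 : Matrix (Fin 2) (Fin 2) ℂ := !![0, -Complex.I; Complex.I, 0]

/-- The single-qubit Pauli `Z` matrix. -/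
def Z2 : Matrix (Fin 2) (Fin 2) ℂ := !![1, 0; 0, -1]

/-- The three Pauli matrices `X, Y, Z`. -/
def pauli : Fin 3 → Matrix (Fin 2) (Fin 2) ℂ := ![X2, Y2, Z2]

/-- The `n`-qubit operator acting as the single-qubit operator `M` on qubit `i`
and as the identity on all other qubits. -/
def localOp {n : ℕ} (M : Matrix (Fin 2) (Fin 2) ℂ) (i : Fin n) : QOp n :=
  Matrix.of fun a b => ∏ j, if j = i then M (a j) (b j) else (if a j = b j then 1 else 0)

/-- The global swap unitary `S` on the doubled system, mapping `|a⟩⊗|b⟩` to `|b⟩⊗|a⟩`. -/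
def regSwap (n : ℕ) : DOp n :=
  Matrix.of fun p q => if p.1 = q.2 ∧ p.2 = q.1 then 1 else 0

/-- The unitary `Sᵢ` swapping qubit `i` of the first register with qubit `i` of the
second register of the doubled system. -/
def qubitSwap (n : ℕ) (i : Fin n) : DOp n :=
  Matrix.of fun p q =>
    if p.1 = Function.update q.1 i (q.2 i) ∧ p.2 = Function.update q.2 i (q.1 i) then 1 else 0

/-- The operator norm (largest singular value) `‖·‖∞` of a square complex matrix,
via its action on Euclidean space. -/
def opNorm {m : Type*} [Fintype m] [DecidableEq m] (A : Matrix m m ℂ) : ℝ :=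
  ‖Matrix.toEuclideanCLM (𝕜 := ℂ) A‖

/-- The matrix sending the basis vector `q` to the basis vector `f q`. -/
def funMatrix {α : Type*} [DecidableEq α] (f : α → α) : Matrix α α ℂ :=
  Matrix.of fun p q => if p = f q then 1 else 0

lemma funMatrix_mul {α : Type*} [Fintype α] [DecidableEq α] (f g : α → α) :
    funMatrix f * funMatrix g = funMatrix (f ∘ g) := by
  ext p q
  simp [funMatrix, Matrix.mul_apply]

/-- Exchange of the two registers on the qubits belonging to `l`. -/
def swapOn {n : ℕ} (l : List (Fin n)) (q : (Fin n → Fin 2) × (Fin n → Fin 2)) :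
    (Fin n → Fin 2) × (Fin n → Fin 2) :=
  (fun j => if j ∈ l then q.2 j else q.1 j, fun j => if j ∈ l then q.1 j else q.2 j)

lemma qubitSwap_eq {n : ℕ} (i : Fin n) : qubitSwap n i = funMatrix (swapOn [i]) := by
  ext p q
  have h1 : Function.update q.1 i (q.2 i) = (swapOn [i] q).1 := by
    ext j; by_cases h : j = i <;> simp [swapOn, h]
  have h2 : Function.update q.2 i (q.1 i) = (swapOn [i] q).2 := by
    ext j; by_cases h : j = i <;> simp [swapOn, h]
  simp only [qubitSwap, funMatrix, Matrix.of_apply, h1, h2, Prod.ext_iff]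

lemma regSwap_eq (n : ℕ) : regSwap n = funMatrix Prod.swap := by
  ext p q
  simp only [regSwap, funMatrix, Matrix.of_apply, Prod.ext_iff, Prod.fst_swap, Prod.snd_swap]

lemma qubitSwap_commute {n : ℕ} (i j : Fin n) : Commute (qubitSwap n i) (qubitSwap n j) := by
  rw [Commute, SemiconjBy, qubitSwap_eq, qubitSwap_eq, funMatrix_mul, funMatrix_mul]
  congr 1
  funext q
  refine Prod.ext (funext fun k => ?_) (funext fun k => ?_) <;>
    by_cases hi : k = i <;> by_cases hj : k = j <;> simp [swapOn, hi, hj]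

lemma prod_qubitSwap_list {n : ℕ} (l : List (Fin n)) (hl : l.Nodup) :
    (l.map (qubitSwap n)).prod = funMatrix (swapOn l) := by
  induction l with
  | nil =>
    ext p q
    simp [funMatrix, swapOn, Matrix.one_apply]
  | cons i l ih =>
    obtain ⟨hi, hl⟩ := List.nodup_cons.mp hl
    rw [List.map_cons, List.prod_cons, ih hl, qubitSwap_eq, funMatrix_mul]
    congr 1
    funext q
    refine Prod.ext (funext fun k => ?_) (funext fun k => ?_) <;>
    · by_cases hk : k = i
      · subst hk
        simp [swapOn, hi]
      · simp [swapOn, hk]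

lemma prod_qubitSwap (n : ℕ) : ((List.finRange n).map (qubitSwap n)).prod = regSwap n := by
  rw [prod_qubitSwap_list _ (List.nodup_finRange n), regSwap_eq]
  congr 1
  funext q
  simp [swapOn, Prod.swap]

lemma localOp_apply {n : ℕ} (M : Matrix (Fin 2) (Fin 2) ℂ) (i : Fin n) (a b : Fin n → Fin 2) :
    localOp M i a b = M (a i) (b i) * if ∀ j, j ≠ i → a j = b j then 1 else 0 := by
  rw [localOp, Matrix.of_apply, ← Finset.mul_prod_erase _ _ (Finset.mem_univ i), if_pos rfl]
  congr 1
  rw [Finset.prod_congr rfl (g := fun j => if a j = b j then (1 : ℂ) else 0)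
    fun j hj => if_neg (Finset.ne_of_mem_erase hj), Finset.prod_ite_zero]
  simp

/-- The single-qubit case: `½ (I⊗I + X⊗X + Y⊗Y + Z⊗Z)` is the swap of two qubits. -/
lemma pauli_swap (a b c d : Fin 2) :
    (1 / 2 : ℂ) * ((if a = b then 1 else 0) * (if c = d then 1 else 0))
      + (1 / 2 : ℂ) * ∑ p : Fin 3, pauli p a b * pauli p c d
      = if a = d ∧ c = b then 1 else 0 := by
  have hsum : ∑ p : Fin 3, pauli p a b * pauli p c d
      = X2 a b * X2 c d + Y2 a b * Y2 c d + Z2 a b * Z2 c d := Fin.sum_univ_three _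
  rw [hsum]
  fin_cases a <;> fin_cases b <;> fin_cases c <;> fin_cases d <;>
    norm_num [X2, Y2, Z2]

lemma half_pauli_sum_eq_qubitSwap {n : ℕ} (i : Fin n) :
    (1 / 2 : ℂ) • ((1 : QOp n) ⊗ₖ (1 : QOp n))
      + (1 / 2 : ℂ) • ∑ p : Fin 3, localOp (pauli p) i ⊗ₖ localOp (pauli p) i
      = qubitSwap n i := by
  ext ⟨a, c⟩ ⟨b, d⟩
  have key : ∀ x y : Fin n → Fin 2, (1 : QOp n) x y
      = (if x i = y i then 1 else 0) * if ∀ j, j ≠ i → x j = y j then 1 else 0 := by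
    intro x y
    rw [Matrix.one_apply, ite_zero_mul_ite_zero, mul_one]
    refine if_congr ⟨fun h => by simp [h], fun h => funext fun j => ?_⟩ rfl rfl
    by_cases hj : j = i
    · exact hj ▸ h.1
    · exact h.2 j hj
  have hupd : ∀ (x y : Fin n → Fin 2) (v : Fin 2),
      x = Function.update y i v ↔ x i = v ∧ ∀ j, j ≠ i → x j = y j :=
    fun x y v => Function.eq_update_iff
  have h := pauli_swap (a i) (b i) (c i) (d i)
  simp only [Matrix.add_apply, Matrix.smul_apply, Matrix.sum_apply, Matrix.kroneckerMap_apply,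
    smul_eq_mul, localOp_apply, key, qubitSwap, Matrix.of_apply, hupd]
  by_cases h1 : ∀ j, j ≠ i → a j = b j <;> by_cases h2 : ∀ j, j ≠ i → c j = d j
  · simpa only [if_true, mul_one, eq_true h1, eq_true h2, and_true] using h
  all_goals simp [h1, h2]

lemma factor_eq_conj {n : ℕ} (U : QOp n) (hU : Uᴴ * U = 1) (i : Fin n) :
    (1 / 2 : ℂ) • ((1 : QOp n) ⊗ₖ (1 : QOp n))
      + (1 / 2 : ℂ) • ∑ p : Fin 3, (localOp (pauli p) i) ⊗ₖ (Uᴴ * localOp (pauli p) i * U)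
      = ((1 : QOp n) ⊗ₖ Uᴴ) * qubitSwap n i * ((1 : QOp n) ⊗ₖ U) := by
  rw [← half_pauli_sum_eq_qubitSwap]
  simp only [mul_add, add_mul, Matrix.mul_smul, Matrix.smul_mul, Finset.mul_sum, Finset.sum_mul,
    ← Matrix.mul_kronecker_mul, one_mul, mul_one, hU]

/-- Products of conjugates by mutually inverse elements telescope. -/
lemma list_prod_conj {M ι : Type*} [Monoid M] (V W : M) (hVW : V * W = 1) (hWV : W * V = 1)
    (f : ι → M) (l : List ι) : (l.map fun i => W * f i * V).prod = W * (l.map f).prod * V := by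
  induction l with
  | nil => simp [hWV]
  | cons i l ih =>
    rw [List.map_cons, List.prod_cons, ih, List.map_cons, List.prod_cons]
    calc W * f i * V * (W * (l.map f).prod * V)
        = W * f i * (V * W) * (l.map f).prod * V := by simp only [mul_assoc]
      _ = W * (f i * (l.map f).prod) * V := by rw [hVW]; simp only [mul_assoc, one_mul]

lemma regSwap_conj {n : ℕ} (A : QOp n) :
    regSwap n * ((1 : QOp n) ⊗ₖ A) * regSwap n = A ⊗ₖ (1 : QOp n) := by
  ext ⟨a, b⟩ ⟨c, d⟩
  simp [regSwap, Matrix.mul_apply, Fintype.sum_prod_type, ite_and, Matrix.one_apply]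

/-- For any `n`-qubit unitary `U`, the exact identity
`U† ⊗ U = S · ∏ᵢ [(1/2) I⊗I + (1/2) Σ_{P∈{X,Y,Z}} Pᵢ ⊗ (U† Pᵢ U)]` holds on the doubled
system; moreover the `n` factors pairwise commute, so the product may be taken in any order. -/
theorem sewing_exact_identity (n : ℕ) (U : QOp n)
    (hU : U ∈ Matrix.unitaryGroup (Fin n → Fin 2) ℂ) :
    (∀ i j : Fin n,
      Commute
        ((1 / 2 : ℂ) • ((1 : QOp n) ⊗ₖ (1 : QOp n))
          + (1 / 2 : ℂ) • ∑ p : Fin 3, (localOp (pauli p) i) ⊗ₖ (Uᴴ * localOp (pauli p) i * U))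
        ((1 / 2 : ℂ) • ((1 : QOp n) ⊗ₖ (1 : QOp n))
          + (1 / 2 : ℂ) • ∑ p : Fin 3, (localOp (pauli p) j) ⊗ₖ (Uᴴ * localOp (pauli p) j * U)))
    ∧
    Uᴴ ⊗ₖ U =
      regSwap n *
        ((List.finRange n).map (fun i =>
          (1 / 2 : ℂ) • ((1 : QOp n) ⊗ₖ (1 : QOp n))
            + (1 / 2 : ℂ) •
                ∑ p : Fin 3, (localOp (pauli p) i) ⊗ₖ (Uᴴ * localOp (pauli p) i * U))).prod := by
  have hUU : Uᴴ * U = 1 := Matrix.mem_unitaryGroup_iff'.mp hU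
  have hUU' : U * Uᴴ = 1 := Matrix.mem_unitaryGroup_iff.mp hU
  have hVW : ((1 : QOp n) ⊗ₖ U) * ((1 : QOp n) ⊗ₖ Uᴴ) = 1 := by
    rw [← Matrix.mul_kronecker_mul, hUU', one_mul, Matrix.one_kronecker_one]
  have hWV : ((1 : QOp n) ⊗ₖ Uᴴ) * ((1 : QOp n) ⊗ₖ U) = 1 := by
    rw [← Matrix.mul_kronecker_mul, hUU, one_mul, Matrix.one_kronecker_one]
  simp only [factor_eq_conj U hUU]
  refine ⟨fun i j => ?_, ?_⟩
  · have h2 := fun i j =>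
      list_prod_conj _ _ hVW hWV (qubitSwap n) [i, j]
    simp only [List.map_cons, List.map_nil, List.prod_cons, List.prod_nil, mul_one] at h2
    rw [Commute, SemiconjBy, h2, h2, (qubitSwap_commute i j).eq]
  · rw [list_prod_conj _ _ hVW hWV, prod_qubitSwap, ← mul_assoc, ← mul_assoc, regSwap_conj,
      ← Matrix.mul_kronecker_mul, mul_one, one_mul]
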